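/- There exists an absolute constant C such that: for every finite undirected unweighted simple graph G on n vertices, every finite set P of pairs of vertices of G, and every consistent collection Π of shortest paths in G that contains, for each pair (s,t) ∈ P, a shortest path π_{s,t} from s to t, the total number of distinct edges appearing in the paths {π_{s,t} : (s,t) ∈ P} is at most C · (n + √n · |P|). -/

import Mathlib

/-- A walk `w` is a (contiguous) subwalk of a walk `p` if `p` is obtained by
prepending and appending walks to `w`. -/
def IsSubwalk {V : Type} {G : SimpleGraph V} {x y a b : V}
    (w : G.Walk x y) (p : G.Walk a b) : Prop :=
  ∃ (p₁ : G.Walk a x) (p₂ : G.Walk y b), p = p₁.append (w.append p₂)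

/-- Two paths are consistent if their intersection is either empty or a
contiguous subpath of both (possibly traversed in reverse in the second). -/
def ConsistentPair {V : Type} {G : SimpleGraph V} {a b a' b' : V}
    (p : G.Walk a b) (q : G.Walk a' b') : Prop :=
  (∀ v : V, v ∈ p.support → v ∉ q.support) ∨
  ∃ (x y : V) (w : G.Walk x y),
    IsSubwalk w p ∧ (IsSubwalk w q ∨ IsSubwalk w.reverse q) ∧
    ∀ v : V, (v ∈ p.support ∧ v ∈ q.support) ↔ v ∈ w.support

/-!
Call a common vertex of two paths a *branch vertex* if the two paths have different neighbourhoods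
there. Consistent paths share a single contiguous subpath and can only separate at its two ends, so
each pair of paths has at most two branch vertices. Conversely, a vertex of large degree in the
union is a branch vertex for many pairs of paths, as a single path only accounts for two of its
neighbours. Counting the pairs (branch vertex, pair of paths) in these two ways bounds the sum of
the squared degrees of the union, and Cauchy-Schwarz turns this into a bound on its number of edges.
-/

section Counting

open Finset

theorem card_biUnion_le_add_mul_card_ne {ι α : Type*} [DecidableEq α] {s : Finset ι}
    {A : ι → Finset α} {d : ℕ} (hd : ∀ i ∈ s, #(A i) ≤ d) {i : ι} (hi : i ∈ s) :
    #(s.biUnion A) ≤ d + d * #{j ∈ s | A i ≠ A j} := by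
  have hcover : s.biUnion A ⊆ A i ∪ {j ∈ s | A i ≠ A j}.biUnion A := by
    intro u hu
    obtain ⟨j, hj, huj⟩ := mem_biUnion.1 hu
    by_cases hij : A i = A j
    · exact mem_union_left _ (hij ▸ huj)
    · exact mem_union_right _ (mem_biUnion.2 ⟨j, mem_filter.2 ⟨hj, hij⟩, huj⟩)
  calc #(s.biUnion A) ≤ #(A i ∪ {j ∈ s | A i ≠ A j}.biUnion A) := card_le_card hcover
    _ ≤ #(A i) + #({j ∈ s | A i ≠ A j}.biUnion A) := card_union_le _ _
    _ ≤ d + #{j ∈ s | A i ≠ A j} * d :=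
      add_le_add (hd i hi) (card_biUnion_le_card_mul _ _ _ fun j hj ↦ hd j (mem_filter.1 hj).1)
    _ = d + d * #{j ∈ s | A i ≠ A j} := by rw [mul_comm d]

theorem sq_card_biUnion_le {ι α : Type*} [DecidableEq α] {s : Finset ι}
    {A : ι → Finset α} {d : ℕ} (hd : ∀ i ∈ s, #(A i) ≤ d) :
    #(s.biUnion A) ^ 2 ≤
      d * #(s.biUnion A) + d ^ 2 * #{p ∈ s ×ˢ s | A p.1 ≠ A p.2} := by
  have hcard : #(s.biUnion A) ≤ #s * d := card_biUnion_le_card_mul _ _ _ hd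
  have hsum : #s * #(s.biUnion A) ≤ #s * d + d * #{p ∈ s ×ˢ s | A p.1 ≠ A p.2} :=
    calc #s * #(s.biUnion A) = ∑ _i ∈ s, #(s.biUnion A) := by rw [sum_const, smul_eq_mul]
      _ ≤ ∑ i ∈ s, (d + d * #{j ∈ s | A i ≠ A j}) :=
        sum_le_sum fun i hi ↦ card_biUnion_le_add_mul_card_ne hd hi
      _ = #s * d + d * #{p ∈ s ×ˢ s | A p.1 ≠ A p.2} := by
        simp only [sum_add_distrib, sum_const, smul_eq_mul, ← mul_sum, card_filter, sum_product]
  rcases le_total #(s.biUnion A) d with hle | hle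
  · exact le_add_right ((sq _).le.trans (Nat.mul_le_mul_right _ hle))
  · obtain ⟨e, he⟩ := Nat.exists_eq_add_of_le hle
    have hexcess : #s * e ≤ d * #{p ∈ s ×ˢ s | A p.1 ≠ A p.2} := by
      rw [he, mul_add] at hsum
      exact le_of_add_le_add_left hsum
    calc #(s.biUnion A) ^ 2 = d * #(s.biUnion A) + e * #(s.biUnion A) := by
          rw [sq, ← add_mul, ← he]
      _ ≤ d * #(s.biUnion A) + e * (#s * d) := by gcongr
      _ = d * #(s.biUnion A) + d * (#s * e) := by ring
      _ ≤ d * #(s.biUnion A) + d * (d * #{p ∈ s ×ˢ s | A p.1 ≠ A p.2}) := by gcongr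
      _ = d * #(s.biUnion A) + d ^ 2 * #{p ∈ s ×ˢ s | A p.1 ≠ A p.2} := by ring

end Counting

theorem le_add_of_sq_le_mul_add_sq {R : Type*} [CommRing R] [LinearOrder R]
    [IsStrictOrderedRing R] {x a b : R} (ha : 0 ≤ a) (hb : 0 ≤ b)
    (h : x ^ 2 ≤ a * x + b ^ 2) : x ≤ a + b := by
  by_contra! hx
  nlinarith

section Subgraphs

open Finset

variable {V : Type*} {G : SimpleGraph V}

open Classical in
theorem sum_degree_subgraph_eq_two_mul_ncard_edgeSet [Fintype V] (K : G.Subgraph) :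
    ∑ v, K.degree v = 2 * K.edgeSet.ncard := by
  simpa only [SimpleGraph.Subgraph.degree_spanningCoe, ← SimpleGraph.coe_edgeFinset,
    Set.ncard_coe_finset, ← K.edgeSet_spanningCoe] using
    K.spanningCoe.sum_degrees_eq_twice_card_edges

/-- `v` is a branch vertex of the subgraphs `H` and `K` if it belongs to both of them but has
different neighbourhoods in them. For two paths these are the vertices where one path leaves the
other, including an endpoint of one path at which the other continues. -/
def IsBranchVertex (H K : G.Subgraph) (v : V) : Prop :=
  v ∈ H.verts ∧ v ∈ K.verts ∧ H.neighborSet v ≠ K.neighborSet v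

variable {ι : Type*} [Fintype V] [Fintype ι] {H : ι → G.Subgraph} {d k : ℕ}

open Classical in
theorem sq_degree_iSup_le (v : V) (hd : ∀ i, (H i).degree v ≤ d) :
    (⨆ i, H i).degree v ^ 2 ≤
      d * (⨆ i, H i).degree v + d ^ 2 * #{p : ι × ι | IsBranchVertex (H p.1) (H p.2) v} := by
  let through : Finset ι := {i | v ∈ (H i).verts}
  let N (i : ι) : Finset V := ((H i).neighborSet v).toFinset
  have hdegree : (⨆ i, H i).degree v = #(through.biUnion N) := by
    rw [SimpleGraph.Subgraph.degree, ← Set.toFinset_card]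
    congr 1
    ext u
    simp only [Set.mem_toFinset, SimpleGraph.Subgraph.neighborSet_iSup, Set.mem_iUnion,
      mem_biUnion, through, N, mem_filter, mem_univ, true_and]
    exact exists_congr fun i ↦ (and_iff_right_of_imp fun hu ↦ (H i).edge_vert hu).symm
  have hbranch : {p ∈ through ×ˢ through | N p.1 ≠ N p.2} =
      ({p | IsBranchVertex (H p.1) (H p.2) v} : Finset (ι × ι)) := by
    ext p
    simp only [through, N, mem_filter, mem_product, mem_univ, true_and, ne_eq, Set.toFinset_inj,
      and_assoc]
    rfl
  have hN : ∀ i ∈ through, #(N i) ≤ d := fun i _ ↦ by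
    rw [Set.toFinset_card]
    exact hd i
  rw [hdegree, ← hbranch]
  exact sq_card_biUnion_le hN

open Classical in
theorem sum_card_isBranchVertex_le
    (hk : ∀ i j, #{v | IsBranchVertex (H i) (H j) v} ≤ k) :
    ∑ v, #{p : ι × ι | IsBranchVertex (H p.1) (H p.2) v} ≤ k * Fintype.card ι ^ 2 :=
  calc ∑ v, #{p : ι × ι | IsBranchVertex (H p.1) (H p.2) v}
      = ∑ p : ι × ι, #{v | IsBranchVertex (H p.1) (H p.2) v} :=
        (sum_card_bipartiteAbove_eq_sum_card_bipartiteBelow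
          fun v (p : ι × ι) ↦ IsBranchVertex (H p.1) (H p.2) v)
    _ ≤ #(univ : Finset (ι × ι)) • k :=
        sum_le_card_nsmul _ _ _ fun p _ ↦ hk p.1 p.2
    _ = k * Fintype.card ι ^ 2 := by
        rw [card_univ, Fintype.card_prod, smul_eq_mul, mul_comm, sq]

open Classical in
theorem sq_ncard_edgeSet_iSup_le (hd : ∀ i v, (H i).degree v ≤ d)
    (hk : ∀ i j, #{v | IsBranchVertex (H i) (H j) v} ≤ k) :
    (2 * (⨆ i, H i).edgeSet.ncard) ^ 2 ≤ Fintype.card V *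
      (d * (2 * (⨆ i, H i).edgeSet.ncard) + d ^ 2 * (k * Fintype.card ι ^ 2)) := by
  rw [← sum_degree_subgraph_eq_two_mul_ncard_edgeSet]
  calc (∑ v, (⨆ i, H i).degree v) ^ 2
      ≤ Fintype.card V * ∑ v, (⨆ i, H i).degree v ^ 2 := sq_sum_le_card_mul_sum_sq
    _ ≤ Fintype.card V * ∑ v, (d * (⨆ i, H i).degree v +
          d ^ 2 * #{p : ι × ι | IsBranchVertex (H p.1) (H p.2) v}) := by
        gcongr with v
        exact sq_degree_iSup_le v fun i ↦ hd i v
    _ = Fintype.card V * (d * ∑ v, (⨆ i, H i).degree v +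
          d ^ 2 * ∑ v, #{p : ι × ι | IsBranchVertex (H p.1) (H p.2) v}) := by
        rw [sum_add_distrib, ← mul_sum, ← mul_sum]
    _ ≤ Fintype.card V * (d * ∑ v, (⨆ i, H i).degree v +
          d ^ 2 * (k * Fintype.card ι ^ 2)) := by
        gcongr
        exact sum_card_isBranchVertex_le hk

end Subgraphs

section Paths

theorem neighborSet_toSubgraph_eq_empty {V : Type*} {G : SimpleGraph V} {a b v : V}
    {p : G.Walk a b} (hv : v ∉ p.support) : p.toSubgraph.neighborSet v = ∅ :=
  Set.eq_empty_of_forall_notMem fun _ hu ↦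
    hv (p.mem_verts_toSubgraph.1 (p.toSubgraph.edge_vert hu))

theorem degree_toSubgraph_le_two {V : Type*} {G : SimpleGraph V} {a b : V} {p : G.Walk a b}
    (hp : p.IsPath) (v : V) [Fintype (p.toSubgraph.neighborSet v)] :
    p.toSubgraph.degree v ≤ 2 := by
  rw [SimpleGraph.Subgraph.degree, ← Nat.card_eq_fintype_card, Nat.card_coe_set_eq]
  by_cases hv : v ∈ p.support
  · obtain ⟨i, rfl, hi⟩ := SimpleGraph.Walk.mem_support_iff_exists_getVert.1 hv
    by_cases hnil : p.Nil
    · cases hnil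
      simp
    rcases Nat.eq_zero_or_pos i with rfl | hpos
    · rw [p.getVert_zero, hp.neighborSet_toSubgraph_startpoint hnil, Set.ncard_singleton]
      exact one_le_two
    rcases hi.eq_or_lt with rfl | hlt
    · rw [p.getVert_length, hp.neighborSet_toSubgraph_endpoint hnil, Set.ncard_singleton]
      exact one_le_two
    · exact (hp.ncard_neighborSet_toSubgraph_internal_eq_two hpos.ne' hlt).le
  · rw [neighborSet_toSubgraph_eq_empty hv, Set.ncard_empty]
    exact Nat.zero_le 2

variable {V : Type} {G : SimpleGraph V}

theorem IsSubwalk.neighborSet_toSubgraph_eq {x y a b v : V} {w : G.Walk x y} {p : G.Walk a b}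
    (h : IsSubwalk w p) (hp : p.IsPath) (hv : v ∈ w.support) (hx : v ≠ x) (hy : v ≠ y) :
    p.toSubgraph.neighborSet v = w.toSubgraph.neighborSet v := by
  obtain ⟨p₁, p₂, rfl⟩ := h
  have hp₁ : v ∉ p₁.support := fun hv₁ ↦ hp.ne_of_mem_support_of_append hx hv₁
    ((w.mem_support_append_iff p₂).2 (.inl hv)) rfl
  have hp₂ : v ∉ p₂.support := fun hv₂ ↦
    hp.of_append_right.ne_of_mem_support_of_append hy hv hv₂ rfl
  rw [SimpleGraph.Walk.toSubgraph_append, SimpleGraph.Walk.toSubgraph_append,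
    SimpleGraph.Subgraph.neighborSet_sup, SimpleGraph.Subgraph.neighborSet_sup,
    neighborSet_toSubgraph_eq_empty hp₁, neighborSet_toSubgraph_eq_empty hp₂, Set.empty_union,
    Set.union_empty]

theorem ConsistentPair.exists_isBranchVertex_subset_pair {a b a' b' : V} {p : G.Walk a b}
    {q : G.Walk a' b'} (h : ConsistentPair p q) (hp : p.IsPath) (hq : q.IsPath) :
    ∃ x y, {v | IsBranchVertex p.toSubgraph q.toSubgraph v} ⊆ {x, y} := by
  rcases h with hdisjoint | ⟨x, y, w, hwp, hwq, hw⟩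
  · exact ⟨a, a, fun v hv ↦ absurd (q.mem_verts_toSubgraph.1 hv.2.1)
      (hdisjoint v (p.mem_verts_toSubgraph.1 hv.1))⟩
  refine ⟨x, y, fun v ⟨hvp, hvq, hne⟩ ↦ ?_⟩
  by_contra! hxy
  obtain ⟨hx, hy⟩ : v ≠ x ∧ v ≠ y := not_or.1 hxy
  have hvw : v ∈ w.support :=
    (hw v).1 ⟨p.mem_verts_toSubgraph.1 hvp, q.mem_verts_toSubgraph.1 hvq⟩
  have hq_eq : q.toSubgraph.neighborSet v = w.toSubgraph.neighborSet v := by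
    rcases hwq with hwq | hwq
    · exact hwq.neighborSet_toSubgraph_eq hq hvw hx hy
    · rw [← w.toSubgraph_reverse]
      exact hwq.neighborSet_toSubgraph_eq hq (by rwa [w.support_reverse, List.mem_reverse]) hy hx
  exact hne ((hwp.neighborSet_toSubgraph_eq hp hvw hx hy).trans hq_eq.symm)

open Finset Classical in
theorem ConsistentPair.card_isBranchVertex_le_two [Fintype V] {a b a' b' : V} {p : G.Walk a b}
    {q : G.Walk a' b'} (h : ConsistentPair p q) (hp : p.IsPath) (hq : q.IsPath) :
    #{v | IsBranchVertex p.toSubgraph q.toSubgraph v} ≤ 2 := by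
  obtain ⟨x, y, hxy⟩ := h.exists_isBranchVertex_subset_pair hp hq
  refine (card_le_card (t := {x, y}) fun v hv ↦ ?_).trans card_le_two
  simpa using hxy (mem_filter.1 hv).2

end Paths

theorem distance_preserver_general {V : Type} {ι : Type*} [Fintype V] [Fintype ι]
    {G : SimpleGraph V} {s t : ι → V} (π : ∀ i, G.Walk (s i) (t i)) (hpath : ∀ i, (π i).IsPath)
    (hcons : ∀ i j, ConsistentPair (π i) (π j)) :
    ({e | ∃ i, e ∈ (π i).edges}.ncard : ℝ) ≤
      2 * (Fintype.card V + √(Fintype.card V) * Fintype.card ι) := by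
  classical
  have hedges : {e | ∃ i, e ∈ (π i).edges} = (⨆ i, (π i).toSubgraph).edgeSet := by
    ext e
    simp only [Set.mem_ofPred_eq, SimpleGraph.Subgraph.edgeSet_iSup, Set.mem_iUnion,
      SimpleGraph.Walk.mem_edges_toSubgraph]
  have hcount := sq_ncard_edgeSet_iSup_le (fun i v ↦ degree_toSubgraph_le_two (hpath i) v)
    (fun i j ↦ (hcons i j).card_isBranchVertex_le_two (hpath i) (hpath j))
  rw [← hedges] at hcount
  set n := Fintype.card V
  set E := {e | ∃ i, e ∈ (π i).edges}.ncard
  have hquadratic : (E : ℝ) ^ 2 ≤ n * E + (2 * (√n * Fintype.card ι)) ^ 2 := by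
    have hcount_real : (2 * E : ℝ) ^ 2 ≤
        n * (2 * (2 * E) + 2 ^ 2 * (2 * (Fintype.card ι : ℝ) ^ 2)) := mod_cast hcount
    rw [mul_pow, mul_pow, Real.sq_sqrt n.cast_nonneg]
    nlinarith [mul_nonneg n.cast_nonneg (sq_nonneg (Fintype.card ι : ℝ))]
  have hbound := le_add_of_sq_le_mul_add_sq n.cast_nonneg (by positivity) hquadratic
  linarith [n.cast_nonneg (α := ℝ)]

/-- **Distance preservers (Coppersmith–Elkin).** There is an absolute constant
`C` such that: for every finite simple graph `G` on `n` vertices, every finite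
set `P` of pairs of vertices, and every consistent family of shortest paths
`π_{s,t}` for `(s,t) ∈ P`, the total number of distinct edges appearing in the
paths is at most `C · (n + √n · |P|)`. -/
theorem distance_preserver :
    ∃ C : ℝ, 0 < C ∧
      ∀ (V : Type) [Fintype V] (G : SimpleGraph V) (P : Finset (V × V))
        (π : ∀ p ∈ P, G.Walk p.1 p.2),
        (∀ p (hp : p ∈ P), (π p hp).IsPath ∧ (π p hp).length = G.dist p.1 p.2) →
        (∀ p (hp : p ∈ P) q (hq : q ∈ P), ConsistentPair (π p hp) (π q hq)) →
        (({e : Sym2 V | ∃ p, ∃ hp : p ∈ P, e ∈ (π p hp).edges}).ncard : ℝ) ≤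
          C * ((Fintype.card V : ℝ) +
            Real.sqrt (Fintype.card V) * (P.card : ℝ)) :=
  ⟨2, two_pos, fun V _ G P π hpath hcons ↦ by
    simpa using distance_preserver_general (fun p : P ↦ π p p.2) (fun p ↦ (hpath p p.2).1)
      fun p q ↦ hcons p p.2 q q.2⟩
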